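/- Fix an integer n ≥ 1 and real numbers β > 0, γ > 0, c_μ, c_σ. Let μ, σ : ℝ → ℝ be functions such that μ(α) − α/γ → c_μ and σ(α) − √(2α/γ) → c_σ as α → +∞. Then ∫_{ℝⁿ} | σ(α)^n · p_{L,α}(μ(α) + σ(α)x_1, …, μ(α) + σ(α)x_n) − p_G(x_1, …, x_n) | dx → 0 as α → +∞; in particular the probability measures induced by the rescaled Laguerre β-ensemble eigenvalue densities converge in total variation to the measure with density p_G. -/

import Mathlib

open Filter MeasureTheory

/-- The Vandermonde determinant `Δ(x) = ∏_{j>k} (x_j − x_k)`. -/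
noncomputable def vdm (n : ℕ) (x : Fin n → ℝ) : ℝ :=
  ∏ p ∈ Finset.univ.filter (fun p : Fin n × Fin n => p.2 < p.1), (x p.1 - x p.2)

/-- The normalization constant of the Gaussian β-ensemble. -/
noncomputable def ZG (n : ℕ) (β γ : ℝ) : ℝ :=
  (2 * Real.pi) ^ ((n : ℝ) / 2) * ((n.factorial : ℝ) / Real.Gamma (β / 2) ^ n) *
    ∏ k ∈ Finset.range n,
      Real.Gamma (((k : ℝ) + 1) * β / 2) / (2 * γ) ^ ((1 + (k : ℝ) * β) / 2)

/-- The Gaussian β-ensemble joint eigenvalue density. -/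
noncomputable def pG (n : ℕ) (β γ : ℝ) (x : Fin n → ℝ) : ℝ :=
  (ZG n β γ)⁻¹ * |vdm n x| ^ β * ∏ k, Real.exp (-γ * (x k) ^ 2)

/-- The normalization constant of the Laguerre β-ensemble with parameter `α`. -/
noncomputable def ZL (n : ℕ) (β γ α : ℝ) : ℝ :=
  ((n.factorial : ℝ) / Real.Gamma (β / 2) ^ n) *
    ∏ k ∈ Finset.range n,
      Real.Gamma (α + 1 + (k : ℝ) * β / 2) * Real.Gamma (((k : ℝ) + 1) * β / 2) /
        γ ^ (α + 1 + (k : ℝ) * β)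

/-- The Laguerre β-ensemble joint eigenvalue density. -/
noncomputable def pL (n : ℕ) (β γ α : ℝ) (x : Fin n → ℝ) : ℝ :=
  (ZL n β γ α)⁻¹ * |vdm n x| ^ β *
    ∏ k, (if 0 < x k then (x k) ^ α * Real.exp (-γ * x k) else 0)

/-- the one-particle rescaled Laguerre weight -/
noncomputable def FF (γ α m s y : ℝ) : ℝ :=
  if 0 < m + s * y then ((m + s * y) / m) ^ α * Real.exp (-γ * (s * y)) else 0

/-- Hypotheses on the scaling, in derived form. -/
structure Scal (γ : ℝ) (μ σ : ℝ → ℝ) : Prop where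
  mpos : ∀ᶠ α in atTop, 0 < μ α
  spos : ∀ᶠ α in atTop, 0 < σ α
  h1 : Tendsto (fun α => σ α / μ α) atTop (nhds 0)
  h2 : Tendsto (fun α => α * (σ α / μ α) ^ 2) atTop (nhds (2 * γ))
  h3 : Tendsto (fun α => σ α * (α / μ α - γ)) atTop (nhds 0)
  h4 : Tendsto (fun α => μ α / σ α ^ 2) atTop (nhds (1 / 2))

theorem scal_of (γ cμ cσ : ℝ) (hγ : 0 < γ) (μ σ : ℝ → ℝ)
    (hμ : Tendsto (fun α => μ α - α / γ) atTop (nhds cμ))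
    (hσ : Tendsto (fun α => σ α - Real.sqrt (2 * α / γ)) atTop (nhds cσ)) :
    Scal γ μ σ := by
  have hinv : Tendsto (fun α : ℝ => α⁻¹) atTop (nhds 0) := tendsto_inv_atTop_zero
  have hsq : Tendsto (fun α : ℝ => Real.sqrt α) atTop atTop := Real.tendsto_sqrt_atTop
  have hsqi : Tendsto (fun α : ℝ => (Real.sqrt α)⁻¹) atTop (nhds 0) :=
    tendsto_inv_atTop_zero.comp hsq
  have hm : Tendsto (fun α => μ α / α) atTop (nhds (1 / γ)) := by
    have h := (hμ.mul hinv).add_const (1 / γ)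
    simp only [mul_zero, zero_add] at h
    refine h.congr' ?_
    filter_upwards [eventually_gt_atTop 0] with α hα
    field_simp
    ring
  have hs : Tendsto (fun α => σ α / Real.sqrt α) atTop (nhds (Real.sqrt (2 / γ))) := by
    have h := (hσ.mul hsqi).add_const (Real.sqrt (2 / γ))
    simp only [mul_zero, zero_add] at h
    refine h.congr' ?_
    filter_upwards [eventually_gt_atTop 0] with α hα
    have h0 : 0 < Real.sqrt α := Real.sqrt_pos.2 hα
    have h1 : Real.sqrt (2 * α / γ) = Real.sqrt (2 / γ) * Real.sqrt α := by
      rw [← Real.sqrt_mul (by positivity)]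
      congr 1
      ring
    rw [h1]
    field_simp
    ring
  have hγ' : (0:ℝ) < 1 / γ := by positivity
  have hs0 : 0 < Real.sqrt (2 / γ) := Real.sqrt_pos.2 (by positivity)
  have mpos : ∀ᶠ α in atTop, 0 < μ α := by
    filter_upwards [hm.eventually (lt_mem_nhds hγ'), eventually_gt_atTop 0] with α h hα
    exact (div_pos_iff_of_pos_right hα).1 h
  have spos : ∀ᶠ α in atTop, 0 < σ α := by
    filter_upwards [hs.eventually (lt_mem_nhds hs0), eventually_gt_atTop 0] with α h hα
    exact (div_pos_iff_of_pos_right (Real.sqrt_pos.2 hα)).1 h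
  have h1 : Tendsto (fun α => σ α / μ α) atTop (nhds 0) := by
    have h := (hs.div hm hγ'.ne').mul hsqi
    simp only [mul_zero] at h
    refine h.congr' ?_
    filter_upwards [eventually_gt_atTop 0, mpos] with α hα hmα
    have h0 : 0 < Real.sqrt α := Real.sqrt_pos.2 hα
    have h2 : Real.sqrt α ^ 2 = α := Real.sq_sqrt hα.le
    simp only [Pi.div_apply]
    field_simp
    rw [h2]
  refine ⟨mpos, spos, h1, ?_, ?_, ?_⟩
  · have h := (hs.div hm hγ'.ne').pow 2
    have e : (Real.sqrt (2 / γ) / (1 / γ)) ^ 2 = 2 * γ := by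
      rw [div_pow, Real.sq_sqrt (by positivity)]
      field_simp
    rw [e] at h
    refine h.congr' ?_
    filter_upwards [eventually_gt_atTop 0, mpos] with α hα hmα
    have h0 : 0 < Real.sqrt α := Real.sqrt_pos.2 hα
    have h2 : Real.sqrt α ^ 2 = α := Real.sq_sqrt hα.le
    simp only [Pi.div_apply]
    rw [div_pow, div_pow, h2]
    field_simp
  · have h := (h1.mul hμ).const_mul (-γ)
    simp only [zero_mul, mul_zero] at h
    refine h.congr' ?_
    filter_upwards [eventually_gt_atTop 0, mpos] with α hα hmα
    field_simp
    ring
  · have h := hm.div (hs.pow 2) (by positivity)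
    have e : (1 / γ) / (Real.sqrt (2 / γ)) ^ 2 = 1 / 2 := by
      rw [Real.sq_sqrt (by positivity)]
      field_simp
    rw [e] at h
    refine h.congr' ?_
    filter_upwards [eventually_gt_atTop 0, mpos, spos] with α hα hmα hsα
    have h2 : Real.sqrt α ^ 2 = α := Real.sq_sqrt hα.le
    simp only [Pi.div_apply]
    rw [div_pow, h2]
    field_simp

theorem FF_tendsto {γ : ℝ} {μ σ : ℝ → ℝ} (S : Scal γ μ σ) (y : ℝ) :
    Tendsto (fun α => FF γ α (μ α) (σ α) y) atTop (nhds (Real.exp (-γ * y ^ 2))) := by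
  set t : ℝ → ℝ := fun α => σ α / μ α * y with ht
  have t0 : Tendsto t atTop (nhds 0) := by simpa using S.h1.mul_const y
  have ta : Tendsto (fun α => |t α|) atTop (nhds 0) := by simpa using t0.abs
  have t2 : Tendsto (fun α => α * t α ^ 2) atTop (nhds (2 * γ * y ^ 2)) := by
    refine (S.h2.mul_const (y ^ 2)).congr fun α => ?_
    simp only [ht]; ring
  have hrem : Tendsto (fun α => α * (Real.log (1 + t α) - t α + t α ^ 2 / 2)) atTop (nhds 0) := by
    have hb : Tendsto (fun α => α * t α ^ 2 * |t α| / (1 - |t α|)) atTop (nhds 0) := by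
      have := (t2.mul ta).div (tendsto_const_nhds (x := (1:ℝ)) |>.sub ta) (by norm_num)
      rw [mul_zero, zero_div] at this
      exact this
    refine squeeze_zero_norm' ?_ hb
    filter_upwards [eventually_gt_atTop 0, ta.eventually (gt_mem_nhds one_pos)] with α hα h
    have := Real.abs_log_sub_add_sum_range_le (x := -t α) (by simpa using h) 2
    simp only [Finset.sum_range_succ, Finset.sum_range_zero, abs_neg, sub_neg_eq_add] at this
    rw [Real.norm_eq_abs, abs_mul, abs_of_pos hα]
    have e : α * t α ^ 2 * |t α| / (1 - |t α|) = α * (|t α| ^ 3 / (1 - |t α|)) := by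
      rw [← sq_abs (t α)]; ring
    rw [e]
    refine mul_le_mul_of_nonneg_left (le_trans (le_of_eq ?_) this) hα.le
    congr 1
    push_cast
    ring
  have hexp : Tendsto (fun α => α * Real.log (1 + t α) - γ * (σ α * y)) atTop
      (nhds (-γ * y ^ 2)) := by
    have := (hrem.sub (t2.div_const 2)).add (S.h3.mul_const y)
    have e : 0 - 2 * γ * y ^ 2 / 2 + 0 * y = -γ * y ^ 2 := by ring
    rw [e] at this
    refine this.congr' ?_
    filter_upwards [S.mpos] with α hm
    simp only [ht]
    field_simp
    ring
  refine ((Real.continuous_exp.tendsto _).comp hexp).congr' ?_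
  filter_upwards [S.mpos, ta.eventually (gt_mem_nhds one_pos)] with α hm h
  have h1 : 0 < 1 + t α := by have := (abs_lt.1 h).1; linarith
  have e : (μ α + σ α * y) / μ α = 1 + t α := by simp only [ht]; field_simp
  have hp : 0 < μ α + σ α * y := by
    have := mul_pos h1 hm
    rw [← e] at this
    rwa [div_mul_cancel₀ _ hm.ne'] at this
  simp only [Function.comp, FF, if_pos hp, e]
  rw [Real.rpow_def_of_pos h1, ← Real.exp_add]
  congr 1
  ring

theorem FF_nonneg (γ α m s y : ℝ) (hm : 0 < m) : 0 ≤ FF γ α m s y := by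
  unfold FF
  split_ifs with h
  · have : 0 ≤ (m + s * y) / m := by positivity
    positivity
  · exact le_rfl

theorem FF_pow_bound (γ α m s y u : ℝ) (hm : 0 < m) (hα : 0 < α) (hu : 1 ≤ u)
    (h : 0 < m + s * y) : FF γ α m s (u * y) ≤ FF γ α m s y ^ u := by
  unfold FF
  rw [if_pos h]
  have hq : 0 < (m + s * y) / m := by positivity
  split_ifs with h'
  · rw [Real.mul_rpow (by positivity) (by positivity), ← Real.exp_mul, ← Real.rpow_mul hq.le,
      mul_comm α u, Real.rpow_mul hq.le]
    have e : -γ * (s * (u * y)) = -γ * (s * y) * u := by ring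
    rw [e]
    refine mul_le_mul_of_nonneg_right ?_ (by positivity)
    refine Real.rpow_le_rpow (by positivity) ?_ hα.le
    have e1 : (m + s * y) / m = 1 + s * y / m := by field_simp
    have e2 : (m + s * (u * y)) / m = 1 + u * (s * y / m) := by field_simp
    rw [e2, e1]
    refine one_add_mul_self_le_rpow_one_add ?_ hu
    rw [e1] at hq
    linarith
  · positivity

theorem FF_small_bound (γ α m s y : ℝ) (hm : 0 < m) (hα : 0 < α) (hy : |y| ≤ 1)
    (hb : |s * (α / m - γ)| ≤ 1) : FF γ α m s y ≤ Real.exp 1 := by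
  unfold FF
  split_ifs with h
  · have hq : 0 < (m + s * y) / m := by positivity
    rw [Real.rpow_def_of_pos hq, ← Real.exp_add]
    refine Real.exp_le_exp.2 ?_
    have h1 := Real.log_le_sub_one_of_pos hq
    have h2 : Real.log ((m + s * y) / m) * α ≤ ((m + s * y) / m - 1) * α :=
      mul_le_mul_of_nonneg_right h1 hα.le
    have e : ((m + s * y) / m - 1) * α + -γ * (s * y) = s * (α / m - γ) * y := by
      field_simp; ring
    have h3 : s * (α / m - γ) * y ≤ 1 := by
      refine (le_abs_self _).trans ?_
      rw [abs_mul]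
      exact mul_le_one₀ hb (abs_nonneg _) hy
    linarith
  · positivity

theorem FF_bound {γ : ℝ} {μ σ : ℝ → ℝ} (hγ : 0 < γ) (S : Scal γ μ σ) :
    ∀ᶠ α in atTop, ∀ y, FF γ α (μ α) (σ α) y ≤
      Real.exp (1 + γ / 2) * Real.exp (-(γ / 2) * |y|) := by
  have hlt : Real.exp (-γ) < Real.exp (-(γ / 2)) := Real.exp_lt_exp.2 (by linarith)
  have f1 := FF_tendsto S 1
  have f2 := FF_tendsto S (-1)
  norm_num at f1 f2
  have h3 : Tendsto (fun α => |σ α * (α / μ α - γ)|) atTop (nhds 0) := by simpa using S.h3.abs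
  filter_upwards [S.mpos, S.spos, S.h1.eventually (gt_mem_nhds one_pos), eventually_gt_atTop 0,
    f1.eventually (gt_mem_nhds hlt), f2.eventually (gt_mem_nhds hlt),
    h3.eventually (gt_mem_nhds one_pos)] with α hm hs hr hα g1 g2 hb y
  have hsm : σ α < μ α := by rwa [div_lt_one hm] at hr
  rw [← Real.exp_add]
  by_cases hy : |y| ≤ 1
  · refine (FF_small_bound γ α _ _ y hm hα hy hb.le).trans (Real.exp_le_exp.2 ?_)
    nlinarith
  · push Not at hy
    have key : ∀ e : ℝ, 0 < μ α + σ α * e → FF γ α (μ α) (σ α) e < Real.exp (-(γ / 2)) →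
        |y| * e = y → FF γ α (μ α) (σ α) y ≤ Real.exp (1 + γ / 2 + -(γ / 2) * |y|) := by
      intro e he hF hye
      have h := FF_pow_bound γ α _ _ e |y| hm hα hy.le he
      rw [hye] at h
      refine h.trans ?_
      refine (Real.rpow_le_rpow (FF_nonneg _ _ _ _ _ hm) hF.le (abs_nonneg _)).trans ?_
      rw [← Real.exp_mul]
      refine Real.exp_le_exp.2 ?_
      linarith
    rcases le_total 0 y with h0 | h0
    · exact key 1 (by linarith) g1 (by rw [abs_of_nonneg h0, mul_one])
    · exact key (-1) (by linarith) g2 (by rw [abs_of_nonpos h0]; ring)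

theorem poly_exp_integrable (c b : ℝ) (hc : 0 ≤ c) (hb : 0 < b) :
    Integrable (fun y : ℝ => (1 + |y|) ^ c * Real.exp (-b * |y|)) := by
  have hI : Integrable (fun y : ℝ => (1 + ‖y‖) ^ (-(2:ℝ))) :=
    integrable_one_add_norm (by simp)
  set t : ℝ := b / (c + 2) with ht
  have ht0 : 0 < t := by positivity
  refine (hI.const_mul ((1 + 1 / t) ^ (c + 2))).mono' ?_ (Eventually.of_forall fun y => ?_)
  · exact Measurable.aestronglyMeasurable (by fun_prop)
  have hp : 0 < 1 + |y| := by positivity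
  rw [Real.norm_of_nonneg (by positivity), Real.norm_eq_abs]
  have h1 : 1 + |y| ≤ (1 + 1 / t) * Real.exp (t * |y|) := by
    have h2 : 1 + |y| ≤ (1 + 1 / t) * (t * |y| + 1) := by
      have : (1 + 1 / t) * (t * |y| + 1) = 1 + |y| + (t * |y| + 1 / t) := by field_simp; ring
      rw [this]
      have : 0 ≤ t * |y| + 1 / t := by positivity
      linarith
    exact h2.trans (mul_le_mul_of_nonneg_left (Real.add_one_le_exp _) (by positivity))
  have h2 := Real.rpow_le_rpow hp.le h1 (show 0 ≤ c + 2 by linarith)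
  rw [Real.mul_rpow (by positivity) (by positivity), ← Real.exp_mul] at h2
  have e : t * |y| * (c + 2) = b * |y| := by simp only [ht]; field_simp
  rw [e] at h2
  have e3 : (1 + |y|) ^ c = (1 + |y|) ^ (c + 2) * (1 + |y|) ^ (-(2:ℝ)) := by
    rw [← Real.rpow_add hp]; congr 1; ring
  rw [e3]
  have hpos : 0 < (1 + |y|) ^ (-(2:ℝ)) := by positivity
  calc (1 + |y|) ^ (c + 2) * (1 + |y|) ^ (-(2:ℝ)) * Real.exp (-b * |y|)
      ≤ ((1 + 1 / t) ^ (c + 2) * Real.exp (b * |y|)) * (1 + |y|) ^ (-(2:ℝ)) * Real.exp (-b * |y|) := by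
        gcongr
    _ = (1 + 1 / t) ^ (c + 2) * (1 + |y|) ^ (-(2:ℝ)) * (Real.exp (b * |y|) * Real.exp (-b * |y|)) := by
        ring
    _ = (1 + 1 / t) ^ (c + 2) * (1 + |y|) ^ (-(2:ℝ)) := by
        rw [← Real.exp_add]; simp

theorem FF_measurable (γ α m s : ℝ) : Measurable (FF γ α m s) := by
  unfold FF
  refine Measurable.ite ?_ (by fun_prop) measurable_const
  exact measurableSet_lt measurable_const (by fun_prop)

theorem int_tendsto {γ : ℝ} {μ σ : ℝ → ℝ} (hγ : 0 < γ) (S : Scal γ μ σ) (c : ℝ) (hc : 0 ≤ c) :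
    Tendsto (fun α => ∫ y : ℝ, |(μ α + σ α * y) / μ α| ^ c * FF γ α (μ α) (σ α) y) atTop
      (nhds (Real.sqrt (Real.pi / γ))) := by
  rw [← integral_gaussian γ]
  refine tendsto_integral_filter_of_dominated_convergence
    (fun y => Real.exp (1 + γ / 2) * ((1 + |y|) ^ c * Real.exp (-(γ / 2) * |y|))) ?_ ?_ ?_ ?_
  · refine Eventually.of_forall fun α => Measurable.aestronglyMeasurable ?_
    exact Measurable.mul (by fun_prop) (FF_measurable _ _ _ _)
  · filter_upwards [FF_bound hγ S, S.mpos, S.spos, S.h1.eventually (gt_mem_nhds one_pos)]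
      with α h hm hs hr
    refine Eventually.of_forall fun y => ?_
    have hF := FF_nonneg γ α (μ α) (σ α) y hm
    rw [Real.norm_of_nonneg (by positivity)]
    have h1 : |(μ α + σ α * y) / μ α| ≤ 1 + |y| := by
      have e : (μ α + σ α * y) / μ α = 1 + σ α / μ α * y := by field_simp
      rw [e]
      refine (abs_add_le _ _).trans ?_
      rw [abs_one, abs_mul, abs_of_pos (div_pos hs hm)]
      have := mul_le_mul_of_nonneg_right hr.le (abs_nonneg y)
      linarith
    calc |(μ α + σ α * y) / μ α| ^ c * FF γ α (μ α) (σ α) y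
        ≤ (1 + |y|) ^ c * (Real.exp (1 + γ / 2) * Real.exp (-(γ / 2) * |y|)) :=
          mul_le_mul (Real.rpow_le_rpow (abs_nonneg _) h1 hc) (h y) hF (by positivity)
      _ = _ := by ring
  · exact (poly_exp_integrable c (γ / 2) hc (by positivity)).const_mul _
  · refine Eventually.of_forall fun y => ?_
    have h1 : Tendsto (fun α => |(μ α + σ α * y) / μ α| ^ c) atTop (nhds 1) := by
      have h := ((S.h1.mul_const y).const_add 1).abs
      rw [zero_mul, add_zero, abs_one] at h
      have h := h.rpow_const (p := c) (Or.inl one_ne_zero)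
      rw [Real.one_rpow] at h
      refine h.congr' ?_
      filter_upwards [S.mpos] with α hm
      congr 2
      field_simp
    simpa using h1.mul (FF_tendsto S y)

theorem gamma_eq (γ α m s c : ℝ) (hγ : 0 < γ) (hα : 0 < α) (hm : 0 < m) (hs : 0 < s)
    (hc : 0 ≤ c) :
    Real.Gamma (α + 1 + c) / γ ^ (α + 1 + c) =
      s * m ^ (α + c) * Real.exp (-γ * m) * ∫ y : ℝ, |(m + s * y) / m| ^ c * FF γ α m s y := by
  have h := Real.integral_rpow_mul_exp_neg_mul_Ioi (a := α + 1 + c) (r := γ) (by positivity) hγ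
  rw [one_div, Real.inv_rpow hγ.le] at h
  rw [div_eq_mul_inv, mul_comm, ← h, ← integral_indicator measurableSet_Ioi]
  set g : ℝ → ℝ := (Set.Ioi (0:ℝ)).indicator
    fun t => t ^ (α + 1 + c - 1) * Real.exp (-(γ * t)) with hg
  have h2 : ∫ y : ℝ, g (m + s * y) = s⁻¹ * ∫ y, g y := by
    have := Measure.integral_comp_mul_left (fun y => g (m + y)) s
    rw [this, integral_add_left_eq_self g m, abs_of_pos (inv_pos.2 hs), smul_eq_mul]
  have h3 : ∫ y, g y = s * ∫ y : ℝ, g (m + s * y) := by rw [h2]; field_simp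
  rw [h3, mul_assoc s, mul_assoc s]
  congr 1
  rw [← integral_const_mul]
  refine integral_congr_ae (Eventually.of_forall fun y => ?_)
  simp only [hg, FF, Set.indicator, Set.mem_Ioi]
  split_ifs with hp
  · have hq : 0 < (m + s * y) / m := by positivity
    rw [abs_of_pos hq]
    have e1 : ((m + s * y) / m) ^ c * (((m + s * y) / m) ^ α * Real.exp (-γ * (s * y))) =
        ((m + s * y) / m) ^ (α + c) * Real.exp (-γ * (s * y)) := by
      rw [Real.rpow_add hq]; ring
    rw [e1, Real.div_rpow hp.le hm.le]
    have e2 : -(γ * (m + s * y)) = -γ * m + -γ * (s * y) := by ring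
    rw [e2, Real.exp_add]
    have e3 : α + 1 + c - 1 = α + c := by ring
    rw [e3]
    have := (Real.rpow_pos_of_pos hm (α + c)).ne'
    field_simp
  · simp

theorem bracket_tendsto {γ : ℝ} {μ σ : ℝ → ℝ} (hγ : 0 < γ) (S : Scal γ μ σ) (c : ℝ)
    (hc : 0 ≤ c) :
    Tendsto (fun α => Real.Gamma (α + 1 + c) / γ ^ (α + 1 + 2 * c) /
      (σ α ^ (1 + 2 * c) * μ α ^ α * Real.exp (-γ * μ α))) atTop
      (nhds (Real.sqrt (2 * Real.pi) / (2 * γ) ^ ((1 + 2 * c) / 2))) := by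
  have h := ((S.h4.rpow_const (p := c) (Or.inr hc)).mul (int_tendsto hγ S c hc)).const_mul
    ((γ ^ c)⁻¹)
  have e : (γ ^ c)⁻¹ * ((1 / 2) ^ c * Real.sqrt (Real.pi / γ)) =
      Real.sqrt (2 * Real.pi) / (2 * γ) ^ ((1 + 2 * c) / 2) := by
    have e1 : (1 + 2 * c) / 2 = 1 / 2 + c := by ring
    rw [e1, Real.rpow_add (by positivity), ← Real.sqrt_eq_rpow, Real.mul_rpow (by norm_num) hγ.le,
      Real.div_rpow (by norm_num) (by norm_num), Real.one_rpow, Real.sqrt_div Real.pi_pos.le,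
      Real.sqrt_mul (by norm_num), Real.sqrt_mul (by norm_num)]
    have := (Real.sqrt_pos.2 hγ).ne'
    have : (γ ^ c) ≠ 0 := by positivity
    have : ((2:ℝ) ^ c) ≠ 0 := by positivity
    field_simp
  rw [e] at h
  refine h.congr' ?_
  filter_upwards [S.mpos, S.spos, eventually_gt_atTop 0] with α hm hs hα
  have e1 : γ ^ (α + 1 + 2 * c) = γ ^ (α + 1 + c) * γ ^ c := by
    rw [← Real.rpow_add hγ]; congr 1; ring
  rw [e1, ← div_div (Real.Gamma (α + 1 + c)), gamma_eq γ α (μ α) (σ α) c hγ hα hm hs hc, Real.div_rpow hm.le (by positivity),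
    Real.rpow_add hm, Real.rpow_add hs, Real.rpow_one, Real.rpow_mul hs.le]
  have e2 : σ α ^ (2:ℝ) = σ α ^ 2 := by norm_cast
  rw [e2]
  have : (γ ^ c) ≠ 0 := by positivity
  have : (μ α ^ α) ≠ 0 := by positivity
  have : ((σ α ^ 2) ^ c) ≠ 0 := by positivity
  field_simp

theorem card_pairs (n : ℕ) :
    (Finset.univ.filter (fun p : Fin n × Fin n => p.2 < p.1)).card = ∑ k ∈ Finset.range n, k := by
  rw [Finset.card_filter, ← Finset.univ_product_univ, Finset.sum_product,
    ← Fin.sum_univ_eq_sum_range (fun k => k)]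
  refine Finset.sum_congr rfl fun i _ => ?_
  rw [← Finset.card_filter]
  have : (Finset.univ.filter fun j : Fin n => j < i) = Finset.Iio i := by ext; simp
  simp [this]

theorem vdm_affine (n : ℕ) (m s : ℝ) (x : Fin n → ℝ) :
    vdm n (fun i => m + s * x i) = s ^ (∑ k ∈ Finset.range n, k) * vdm n x := by
  rw [← card_pairs, vdm, vdm, ← Finset.prod_const, ← Finset.prod_mul_distrib]
  refine Finset.prod_congr rfl fun p _ => ?_
  ring

theorem vdm_bound (n : ℕ) (x : Fin n → ℝ) :
    |vdm n x| ≤ (∏ k, (1 + |x k|)) ^ (∑ k ∈ Finset.range n, k) := by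
  rw [← card_pairs, vdm, Finset.abs_prod, ← Finset.prod_const]
  refine Finset.prod_le_prod (fun _ _ => abs_nonneg _) fun p hp => ?_
  have hne : p.1 ≠ p.2 := by
    have := (Finset.mem_filter.1 hp).2
    exact this.ne'
  have h1 : |x p.1 - x p.2| ≤ (1 + |x p.1|) * (1 + |x p.2|) := by
    have := abs_sub (x p.1) (x p.2)
    nlinarith [abs_nonneg (x p.1), abs_nonneg (x p.2),
      mul_nonneg (abs_nonneg (x p.1)) (abs_nonneg (x p.2))]
  refine h1.trans ?_
  rw [← Finset.prod_pair (f := fun k => 1 + |x k|) hne]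
  refine Finset.prod_le_prod_of_subset_of_one_le (Finset.subset_univ _)
    (fun _ _ => by positivity) fun i _ _ => ?_
  have := abs_nonneg (x i)
  linarith

theorem vdm_rpow_bound (n : ℕ) (β : ℝ) (hβ : 0 < β) (x : Fin n → ℝ) :
    |vdm n x| ^ β ≤ ∏ k, (1 + |x k|) ^ (((∑ k ∈ Finset.range n, k : ℕ) : ℝ) * β) := by
  refine (Real.rpow_le_rpow (abs_nonneg _) (vdm_bound n x) hβ.le).trans (le_of_eq ?_)
  have h0 : ∀ k, 0 ≤ 1 + |x k| := fun k => by positivity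
  rw [Real.finsetProd_rpow _ _ (fun i _ => h0 i), Real.rpow_mul (Finset.prod_nonneg fun i _ => h0 i),
    Real.rpow_natCast]

theorem vdm_measurable (n : ℕ) : Measurable (vdm n) := by
  unfold vdm
  fun_prop

/-- the normalising constant after rescaling -/
noncomputable def CC (n : ℕ) (β γ α m s : ℝ) : ℝ :=
  s ^ n * (s ^ (∑ k ∈ Finset.range n, k)) ^ β * (m ^ α * Real.exp (-γ * m)) ^ n * (ZL n β γ α)⁻¹

theorem pL_eq (n : ℕ) (β γ α m s : ℝ) (hm : 0 < m) (hs : 0 < s) (x : Fin n → ℝ) :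
    s ^ n * pL n β γ α (fun i => m + s * x i) =
      CC n β γ α m s * (|vdm n x| ^ β * ∏ k, FF γ α m s (x k)) := by
  have h : ∀ k, (if 0 < m + s * x k then (m + s * x k) ^ α * Real.exp (-γ * (m + s * x k)) else 0)
      = (m ^ α * Real.exp (-γ * m)) * FF γ α m s (x k) := by
    intro k
    unfold FF
    split_ifs with hp
    · rw [Real.div_rpow hp.le hm.le, mul_add, Real.exp_add]
      have := (Real.rpow_pos_of_pos hm α).ne'
      field_simp
    · simp
  unfold pL CC
  rw [vdm_affine, abs_mul, Real.mul_rpow (abs_nonneg _) (abs_nonneg _),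
    abs_of_pos (pow_pos hs _)]
  simp only [h]
  rw [Finset.prod_mul_distrib, Finset.prod_const, Finset.card_univ, Fintype.card_fin]
  ring

theorem CC_inv (n : ℕ) (β γ α m s : ℝ) (hs : 0 < s) :
    (CC n β γ α m s)⁻¹ = ((n.factorial : ℝ) / Real.Gamma (β / 2) ^ n) *
      ∏ k ∈ Finset.range n, (Real.Gamma (((k : ℝ) + 1) * β / 2) *
        (Real.Gamma (α + 1 + (k : ℝ) * β / 2) / γ ^ (α + 1 + 2 * ((k : ℝ) * β / 2)) /
      (s ^ (1 + 2 * ((k : ℝ) * β / 2)) * m ^ α * Real.exp (-γ * m)))) := by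
  have e : s ^ n * (s ^ (∑ k ∈ Finset.range n, k)) ^ β * (m ^ α * Real.exp (-γ * m)) ^ n =
      ∏ k ∈ Finset.range n, (s ^ (1 + 2 * ((k : ℝ) * β / 2)) * m ^ α * Real.exp (-γ * m)) := by
    have h : ∀ k : ℕ, s ^ (1 + 2 * ((k : ℝ) * β / 2)) * m ^ α * Real.exp (-γ * m) =
        s * (s ^ k) ^ β * (m ^ α * Real.exp (-γ * m)) := by
      intro k
      rw [Real.rpow_add hs, Real.rpow_one, ← Real.rpow_natCast s k, ← Real.rpow_mul hs.le]
      have : 2 * ((k : ℝ) * β / 2) = k * β := by ring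
      rw [this]
      ring
    simp only [h]
    rw [Finset.prod_mul_distrib, Finset.prod_mul_distrib, Finset.prod_const, Finset.prod_const,
      Finset.card_range, Real.finsetProd_rpow _ _ (fun i _ => (pow_pos hs i).le),
      Finset.prod_pow_eq_pow_sum]
  unfold CC
  rw [e, mul_inv, inv_inv, ← Finset.prod_inv_distrib, ZL, mul_left_comm, ← Finset.prod_mul_distrib]
  congr 1
  refine Finset.prod_congr rfl fun k _ => ?_
  have : 2 * ((k : ℝ) * β / 2) = k * β := by ring
  rw [this]
  simp only [div_eq_mul_inv]
  ring

theorem ZG_pos (n : ℕ) (β γ : ℝ) (hβ : 0 < β) (hγ : 0 < γ) : 0 < ZG n β γ := by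
  unfold ZG
  have h1 : 0 < Real.Gamma (β / 2) := Real.Gamma_pos_of_pos (by positivity)
  have h2 : 0 < ∏ k ∈ Finset.range n,
      Real.Gamma (((k : ℝ) + 1) * β / 2) / (2 * γ) ^ ((1 + (k : ℝ) * β) / 2) := by
    refine Finset.prod_pos fun k _ => ?_
    have := Real.Gamma_pos_of_pos (s := ((k : ℝ) + 1) * β / 2) (by positivity)
    positivity
  have := Real.pi_pos
  have h3 : (0:ℝ) < n.factorial := by exact_mod_cast n.factorial_pos
  positivity

theorem CC_tendsto (n : ℕ) {β γ : ℝ} {μ σ : ℝ → ℝ} (hβ : 0 < β) (hγ : 0 < γ) (S : Scal γ μ σ) :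
    Tendsto (fun α => CC n β γ α (μ α) (σ α)) atTop (nhds (ZG n β γ)⁻¹) := by
  have h : Tendsto (fun α => (CC n β γ α (μ α) (σ α))⁻¹) atTop (nhds (ZG n β γ)) := by
    have h := (tendsto_finsetProd (Finset.range n) fun k _ =>
      (bracket_tendsto hγ S ((k : ℝ) * β / 2) (by positivity)).const_mul
        (Real.Gamma (((k : ℝ) + 1) * β / 2))).const_mul
          ((n.factorial : ℝ) / Real.Gamma (β / 2) ^ n)
    have e : ((n.factorial : ℝ) / Real.Gamma (β / 2) ^ n) * ∏ k ∈ Finset.range n,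
        (Real.Gamma (((k : ℝ) + 1) * β / 2) * (Real.sqrt (2 * Real.pi) /
          (2 * γ) ^ ((1 + 2 * ((k : ℝ) * β / 2)) / 2))) = ZG n β γ := by
      unfold ZG
      have e1 : (2 * Real.pi) ^ ((n : ℝ) / 2) = ∏ _k ∈ Finset.range n, Real.sqrt (2 * Real.pi) := by
        rw [Finset.prod_const, Finset.card_range, Real.sqrt_eq_rpow, ← Real.rpow_natCast,
          ← Real.rpow_mul (by positivity)]
        congr 1
        ring
      rw [e1, mul_comm (∏ _k ∈ Finset.range n, Real.sqrt (2 * Real.pi)), mul_assoc,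
        ← Finset.prod_mul_distrib]
      congr 1
      refine Finset.prod_congr rfl fun k _ => ?_
      have : 2 * ((k : ℝ) * β / 2) = k * β := by ring
      rw [this]
      ring
    rw [e] at h
    refine h.congr' ?_
    filter_upwards [S.spos] with α hs
    rw [CC_inv n β γ α _ _ hs]
  simpa using h.inv₀ (ZG_pos n β γ hβ hγ).ne'

/-- Laguerre-to-Gaussian transition in total variation: the `L¹` distance between the
rescaled Laguerre β-ensemble eigenvalue density and the Gaussian β-ensemble eigenvalue
density tends to `0` as `α → ∞`; in particular the induced probability measures converge
in total variation. -/
theorem stmt1 (n : ℕ) (hn : 1 ≤ n) (β γ cμ cσ : ℝ) (hβ : 0 < β) (hγ : 0 < γ)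
    (μ σ : ℝ → ℝ)
    (hμ : Tendsto (fun α => μ α - α / γ) atTop (nhds cμ))
    (hσ : Tendsto (fun α => σ α - Real.sqrt (2 * α / γ)) atTop (nhds cσ)) :
    Tendsto (fun α => ∫ x : Fin n → ℝ,
        |σ α ^ n * pL n β γ α (fun i => μ α + σ α * x i) - pG n β γ x|)
      atTop (nhds 0) := by

  have S := scal_of γ cμ cσ hγ μ σ hμ hσ
  have hC := CC_tendsto n hβ hγ S
  set d : ℝ := ((∑ k ∈ Finset.range n, k : ℕ) : ℝ) * β with hd
  have hd0 : 0 ≤ d := by positivity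
  set H : (Fin n → ℝ) → ℝ := fun x => ∏ k, ((1 + |x k|) ^ d *
    (Real.exp (1 + γ / 2) * Real.exp (-(γ / 2) * |x k|))) with hH
  have hHint : Integrable H := by
    refine Integrable.fintype_prod (f := fun _ : Fin n => fun y : ℝ => (1 + |y|) ^ d *
      (Real.exp (1 + γ / 2) * Real.exp (-(γ / 2) * |y|))) fun _ => ?_
    refine ((poly_exp_integrable d (γ / 2) hd0 (by positivity)).const_mul
      (Real.exp (1 + γ / 2))).congr (Eventually.of_forall fun y => ?_)
    simp only []
    ring
  have hbound : ∀ᶠ α in atTop, ∀ x : Fin n → ℝ,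
      |vdm n x| ^ β * ∏ k, FF γ α (μ α) (σ α) (x k) ≤ H x := by
    filter_upwards [FF_bound hγ S, S.mpos] with α hF hm x
    simp only [hH]
    rw [Finset.prod_mul_distrib]
    refine mul_le_mul (vdm_rpow_bound n β hβ x) ?_ ?_ ?_
    · exact Finset.prod_le_prod (fun _ _ => FF_nonneg _ _ _ _ _ hm) fun k _ => hF _
    · exact Finset.prod_nonneg fun _ _ => FF_nonneg _ _ _ _ _ hm
    · exact Finset.prod_nonneg fun _ _ => by positivity
  have hpt : ∀ x : Fin n → ℝ, Tendsto
      (fun α => |vdm n x| ^ β * ∏ k, FF γ α (μ α) (σ α) (x k)) atTop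
      (nhds (|vdm n x| ^ β * ∏ k, Real.exp (-γ * (x k) ^ 2))) := fun x =>
    (tendsto_finsetProd _ fun k _ => FF_tendsto S (x k)).const_mul _
  have hZ := ZG_pos n β γ hβ hγ
  have hGle : ∀ x, |pG n β γ x| ≤ (ZG n β γ)⁻¹ * H x := by
    intro x
    have h1 : |vdm n x| ^ β * ∏ k, Real.exp (-γ * (x k) ^ 2) ≤ H x :=
      le_of_tendsto (hpt x) (hbound.mono fun α h => h x)
    unfold pG
    rw [mul_assoc, abs_of_nonneg]
    · exact mul_le_mul_of_nonneg_left h1 (by positivity)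
    · have : 0 ≤ ∏ k, Real.exp (-γ * (x k) ^ 2) := Finset.prod_nonneg fun _ _ => by positivity
      positivity
  have hH0 : ∀ x, 0 ≤ H x := fun x => Finset.prod_nonneg fun _ _ => by positivity
  have hpGm : Measurable (pG n β γ) := by
    unfold pG
    have := vdm_measurable n
    fun_prop
  rw [← integral_zero (Fin n → ℝ) ℝ (μ := volume)]
  refine tendsto_integral_filter_of_dominated_convergence
    (fun x => ((ZG n β γ)⁻¹ + 1) * H x + (ZG n β γ)⁻¹ * H x) ?_ ?_ ?_ ?_
  · filter_upwards [S.mpos, S.spos] with α hm hs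
    refine Measurable.aestronglyMeasurable ?_
    simp only [pL_eq n β γ α _ _ hm hs]
    have h1 := vdm_measurable n
    have h2 := FF_measurable γ α (μ α) (σ α)
    have h3 : Measurable fun x : Fin n → ℝ => ∏ k, FF γ α (μ α) (σ α) (x k) :=
      Finset.measurable_fun_prod _ fun k _ => h2.comp (measurable_pi_apply k)
    have h4 : Measurable fun x : Fin n → ℝ => CC n β γ α (μ α) (σ α) *
        (|vdm n x| ^ β * ∏ k, FF γ α (μ α) (σ α) (x k)) - pG n β γ x := by fun_prop
    exact measurable_abs.comp h4
  · have hCb : ∀ᶠ α in atTop, |CC n β γ α (μ α) (σ α)| < (ZG n β γ)⁻¹ + 1 := by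
      have h := hC.abs
      rw [abs_of_pos (inv_pos.2 hZ)] at h
      exact h.eventually (gt_mem_nhds (by linarith))
    filter_upwards [hCb, hbound, S.mpos, S.spos] with α hc hb hm hs
    refine Eventually.of_forall fun x => ?_
    rw [Real.norm_eq_abs, abs_abs, pL_eq n β γ α _ _ hm hs]
    refine (abs_sub _ _).trans (add_le_add ?_ (hGle x))
    have h0 : 0 ≤ ∏ k, FF γ α (μ α) (σ α) (x k) :=
      Finset.prod_nonneg fun _ _ => FF_nonneg _ _ _ _ _ hm
    have h1 : 0 ≤ |vdm n x| ^ β * ∏ k, FF γ α (μ α) (σ α) (x k) := by positivity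
    rw [abs_mul, abs_of_nonneg h1]
    exact mul_le_mul hc.le (hb x) h1 (by positivity)
  · exact (hHint.const_mul _).add (hHint.const_mul _)
  · refine Eventually.of_forall fun x => ?_
    have h := ((hC.mul (hpt x)).sub_const (pG n β γ x)).abs
    have e : (ZG n β γ)⁻¹ * (|vdm n x| ^ β * ∏ k, Real.exp (-γ * (x k) ^ 2)) - pG n β γ x = 0 := by
      unfold pG; ring
    rw [e, abs_zero] at h
    refine h.congr' ?_
    filter_upwards [S.mpos, S.spos] with α hm hs
    rw [pL_eq n β γ α _ _ hm hs]
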